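/- arXiv:1809.09892 — 3 statements merged into one kernel-verified Lean document; each statement's English description precedes it below -/
import Mathlib

section
/- Let K be an algebraically closed field with a nontrivial non-archimedean valuation v: K* → ℝ, valuation ring R, and residue field k of characteristic different from 2 and 3. Let W be an integral Weierstrass model of an elliptic curve E over K. Then W is a minimal integral Weierstrass model of E if and only if min{v(c₄), v(c₆)} = 0. -/
open WeierstrassCurve

/-- A Weierstrass model is *integral* with respect to the additive valuation `v` if all of its
coefficients have nonnegative valuation, i.e. lie in the valuation ring `R`. -/
def IsIntegralModel {K : Type*} [Field K] (v : AddValuation K (WithTop ℝ))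
    (W : WeierstrassCurve K) : Prop :=
  0 ≤ v W.a₁ ∧ 0 ≤ v W.a₂ ∧ 0 ≤ v W.a₃ ∧ 0 ≤ v W.a₄ ∧ 0 ≤ v W.a₆

/-- `W` is a Weierstrass model of (the elliptic curve defined by) `E` if it is obtained from `E`
by an admissible change of variables `x = u²x + r`, `y = u³y + u²sx + t`. -/
def IsModelOf {K : Type*} [Field K] (E W : WeierstrassCurve K) : Prop :=
  ∃ C : VariableChange K, W = C • E

/-- `W` is a *minimal integral Weierstrass model* of `E`: it is an integral model of `E` whose
discriminant has minimal valuation among all integral models of `E`. -/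
def IsMinimalModel {K : Type*} [Field K] (v : AddValuation K (WithTop ℝ))
    (E W : WeierstrassCurve K) : Prop :=
  IsModelOf E W ∧ IsIntegralModel v W ∧
    ∀ W' : WeierstrassCurve K, IsModelOf E W' → IsIntegralModel v W' → v W.Δ ≤ v W'.Δ

/-!
Relative to `W`, a model obtained by a change of variables with scaling factor `u` has discriminant
`u⁻¹² Δ`, so `W` is minimal iff every `u` occurring in an integral model satisfies `v u ≤ 0`. As `2`
and `3` are units of the valuation ring, passing to short Weierstrass form shows that `u` occurs iff
`u⁻⁴ c₄` and `u⁻⁶ c₆` are integral. If `c₄` and `c₆` both have positive valuation, then some such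
`u` has `v u = min (v c₄ / 4) (v c₆ / 6) > 0`, by divisibility of the value group.
-/

section Valuation

variable {K Γ₀ : Type*} [Field K] [LinearOrderedAddCommGroupWithTop Γ₀] (v : AddValuation K Γ₀)

lemma ne_zero_of_addValuation_eq_zero {x : K} (hx : v x = 0) : x ≠ 0 :=
  v.ne_top_iff.mp (by simp [hx])

lemma ne_zero_of_nsmul_map_eq {n : ℕ} (hn : n ≠ 0) {x y : K} (h : n • v y = v x) (hx : x ≠ 0) :
    y ≠ 0 := by
  rintro rfl
  rw [← v.map_pow, zero_pow hn, v.map_zero] at h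
  exact hx (v.top_iff.mp h.symm)

lemma exists_nsmul_map_eq_of_dvd {m n : ℕ} (hmn : m ∣ n) (hdiv : ∀ x : K, ∃ y : K, n • v y = v x)
    (x : K) : ∃ y : K, m • v y = v x := by
  obtain ⟨k, rfl⟩ := hmn
  obtain ⟨y, hy⟩ := hdiv x
  exact ⟨y ^ k, by rw [v.map_pow, smul_smul, hy]⟩

lemma nsmul_map_unit_add_map_inv_pow_mul (u : Kˣ) (n : ℕ) (x : K) :
    n • v u + v (↑u⁻¹ ^ n * x) = v x := by
  rw [← v.map_pow, ← v.map_mul, ← mul_assoc, ← mul_pow, u.mul_inv, one_pow, one_mul]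

lemma map_inv_pow_mul_nonneg_iff (u : Kˣ) (n : ℕ) (x : K) :
    0 ≤ v (↑u⁻¹ ^ n * x) ↔ n • v u ≤ v x := by
  have hun : n • v u ≠ ⊤ := by
    rw [← v.map_pow]
    exact v.ne_top_iff.mpr (pow_ne_zero n u.ne_zero)
  rw [← nsmul_map_unit_add_map_inv_pow_mul v u n x, ← add_le_add_iff_right_of_ne_top hun, add_zero]

lemma map_le_map_inv_pow_mul_iff (u : Kˣ) {n : ℕ} (hn : n ≠ 0) {x : K} (hx : x ≠ 0) :
    v x ≤ v (↑u⁻¹ ^ n * x) ↔ v u ≤ 0 := by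
  have hux : v (↑u⁻¹ ^ n * x) ≠ ⊤ :=
    v.ne_top_iff.mpr (mul_ne_zero (pow_ne_zero n u⁻¹.ne_zero) hx)
  rw [← nsmul_nonpos_iff hn, ← add_le_add_iff_left_of_ne_top (b := n • v u) hux, zero_add,
    nsmul_map_unit_add_map_inv_pow_mul]

lemma exists_unit_map_eq_min {a b : K} (hab : a ≠ 0 ∨ b ≠ 0) :
    ∃ u : Kˣ, v u = min (v a) (v b) := by
  obtain ⟨c, hc⟩ : ∃ c, v c = min (v a) (v b) :=
    (min_choice (v a) (v b)).elim (fun h ↦ ⟨a, h.symm⟩) (fun h ↦ ⟨b, h.symm⟩)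
  have hc0 : c ≠ 0 := by
    rw [← v.ne_top_iff, hc, ne_eq, min_eq_top, v.top_iff, v.top_iff]
    tauto
  exact ⟨Units.mk0 c hc0, hc⟩

lemma forall_unit_map_nonpos_iff_min_nonpos {m n : ℕ} (hm : m ≠ 0) (hn : n ≠ 0) {a b : K}
    (hab : a ≠ 0 ∨ b ≠ 0) :
    (∀ u : Kˣ, m • v u ≤ m • v a → n • v u ≤ n • v b → v u ≤ 0) ↔
      min (m • v a) (n • v b) ≤ 0 := by
  constructor
  · intro h
    obtain ⟨u, hu⟩ := exists_unit_map_eq_min v hab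
    have hmin : min (v a) (v b) ≤ 0 := hu ▸ h u
      (nsmul_le_nsmul_right (hu ▸ min_le_left _ _) m)
      (nsmul_le_nsmul_right (hu ▸ min_le_right _ _) n)
    rwa [min_le_iff, nsmul_nonpos_iff hm, nsmul_nonpos_iff hn, ← min_le_iff]
  · intro h u hua hub
    rcases min_le_iff.mp h with ha | hb
    · exact (nsmul_nonpos_iff hm).mp (hua.trans ha)
    · exact (nsmul_nonpos_iff hn).mp (hub.trans hb)

end Valuation

section NormalForm

lemma isShortNF_scaling_smul {R : Type*} [CommRing R] (W : WeierstrassCurve R) [W.IsShortNF]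
    (u : Rˣ) : ((⟨u, 0, 0, 0⟩ : VariableChange R) • W).IsShortNF where
  a₁ := by simp [variableChange_a₁]
  a₂ := by simp [variableChange_a₂]
  a₃ := by simp [variableChange_a₃]

lemma exists_isShortNF_smul {R : Type*} [CommRing R] [Invertible (2 : R)] [Invertible (3 : R)]
    (W : WeierstrassCurve R) (u : Rˣ) :
    ∃ C : VariableChange R, C.u = u ∧ (C • W).IsShortNF := by
  obtain ⟨D, _⟩ := W.exists_variableChange_isShortNF
  refine ⟨⟨u * D.u⁻¹, 0, 0, 0⟩ * D, inv_mul_cancel_right u D.u, ?_⟩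
  rw [mul_smul]
  exact isShortNF_scaling_smul (D • W) _

lemma c₄_ne_zero_or_c₆_ne_zero {R : Type*} [CommRing R] [NoZeroDivisors R] (h2 : (2 : R) ≠ 0)
    (h3 : (3 : R) ≠ 0) {W : WeierstrassCurve R} (hΔ : W.Δ ≠ 0) : W.c₄ ≠ 0 ∨ W.c₆ ≠ 0 := by
  by_contra! ⟨hc₄, hc₆⟩
  have h : (2 ^ 6 * 3 ^ 3 : R) * W.Δ = 0 := by
    linear_combination W.c_relation + W.c₄ ^ 2 * hc₄ - W.c₆ * hc₆
  exact mul_ne_zero (mul_ne_zero (pow_ne_zero 6 h2) (pow_ne_zero 3 h3)) hΔ h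

end NormalForm

section Models

variable {K : Type*} [Field K] {v : AddValuation K (WithTop ℝ)} {E W : WeierstrassCurve K}

lemma IsModelOf.congr_left (h : IsModelOf E W) {W' : WeierstrassCurve K} :
    IsModelOf E W' ↔ IsModelOf W W' := by
  obtain ⟨D, rfl⟩ := h
  constructor
  · rintro ⟨C, rfl⟩
    exact ⟨C * D⁻¹, by rw [smul_smul, inv_mul_cancel_right]⟩
  · rintro ⟨C, rfl⟩
    exact ⟨C * D, smul_smul C D E⟩

lemma IsModelOf.Δ_ne_zero (h : IsModelOf E W) (hΔ : E.Δ ≠ 0) : W.Δ ≠ 0 := by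
  obtain ⟨C, rfl⟩ := h
  rw [variableChange_Δ]
  exact mul_ne_zero (pow_ne_zero 12 C.u⁻¹.ne_zero) hΔ

lemma IsIntegralModel.isIntegral (h : IsIntegralModel v W) :
    W.IsIntegral v.toValuation.integer :=
  let ⟨h₁, h₂, h₃, h₄, h₆⟩ := h
  isIntegral_of_exists_lift _ ⟨⟨_, h₁⟩, rfl⟩ ⟨⟨_, h₂⟩, rfl⟩ ⟨⟨_, h₃⟩, rfl⟩ ⟨⟨_, h₄⟩, rfl⟩
    ⟨⟨_, h₆⟩, rfl⟩

lemma IsIntegralModel.map_c₄_nonneg (h : IsIntegralModel v W) : 0 ≤ v W.c₄ := by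
  have := h.isIntegral
  rw [← integralModel_c₄_eq v.toValuation.integer W]
  exact (integralModel v.toValuation.integer W).c₄.2

lemma IsIntegralModel.map_c₆_nonneg (h : IsIntegralModel v W) : 0 ≤ v W.c₆ := by
  have := h.isIntegral
  rw [← integralModel_c₆_eq v.toValuation.integer W]
  exact (integralModel v.toValuation.integer W).c₆.2

lemma isMinimalModel_iff_forall_map_u_nonpos (hΔ : W.Δ ≠ 0) (hmod : IsModelOf E W)
    (hint : IsIntegralModel v W) :
    IsMinimalModel v E W ↔
      ∀ C : VariableChange K, IsIntegralModel v (C • W) → v C.u ≤ 0 := by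
  have hΔ_le (C : VariableChange K) : v W.Δ ≤ v (C • W).Δ ↔ v C.u ≤ 0 := by
    rw [variableChange_Δ, map_le_map_inv_pow_mul_iff v C.u (by norm_num) hΔ]
  simp only [IsMinimalModel, hmod, hint, true_and, hmod.congr_left]
  constructor
  · exact fun hmin C hC ↦ (hΔ_le C).mp (hmin _ ⟨C, rfl⟩ hC)
  · rintro hu _ ⟨C, rfl⟩ hC
    exact (hΔ_le C).mpr (hu C hC)

lemma isIntegralModel_iff_of_isShortNF (hv2 : v (2 : K) = 0) (hv3 : v (3 : K) = 0)
    [W.IsShortNF] : IsIntegralModel v W ↔ 0 ≤ v W.c₄ ∧ 0 ≤ v W.c₆ := by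
  have hc₄ : v W.c₄ = v W.a₄ := by
    rw [W.c₄_of_isShortNF, show (-48 : K) = -(2 ^ 4 * 3) by norm_num]
    simp [v.map_neg, hv2, hv3]
  have hc₆ : v W.c₆ = v W.a₆ := by
    rw [W.c₆_of_isShortNF, show (-864 : K) = -(2 ^ 5 * 3 ^ 3) by norm_num]
    simp [v.map_neg, hv2, hv3]
  rw [hc₄, hc₆]
  simp [IsIntegralModel]

lemma exists_isIntegralModel_smul_iff (hv2 : v (2 : K) = 0) (hv3 : v (3 : K) = 0) (u : Kˣ) :
    (∃ C : VariableChange K, C.u = u ∧ IsIntegralModel v (C • W)) ↔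
      4 • v u ≤ v W.c₄ ∧ 6 • v u ≤ v W.c₆ := by
  have hc_nonneg (C : VariableChange K) :
      0 ≤ v (C • W).c₄ ∧ 0 ≤ v (C • W).c₆ ↔ 4 • v C.u ≤ v W.c₄ ∧ 6 • v C.u ≤ v W.c₆ := by
    simp only [variableChange_c₄, variableChange_c₆, map_inv_pow_mul_nonneg_iff]
  constructor
  · rintro ⟨C, rfl, hC⟩
    exact (hc_nonneg C).mp ⟨hC.map_c₄_nonneg, hC.map_c₆_nonneg⟩
  · intro hu
    have := invertibleOfNonzero (ne_zero_of_addValuation_eq_zero v hv2)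
    have := invertibleOfNonzero (ne_zero_of_addValuation_eq_zero v hv3)
    obtain ⟨C, rfl, _⟩ := exists_isShortNF_smul W u
    exact ⟨C, rfl, (isIntegralModel_iff_of_isShortNF hv2 hv3).mpr ((hc_nonneg C).mpr hu)⟩

lemma isMinimalModel_iff_forall_unit_map_nonpos (hv2 : v (2 : K) = 0) (hv3 : v (3 : K) = 0)
    (hΔ : W.Δ ≠ 0) (hmod : IsModelOf E W) (hint : IsIntegralModel v W) :
    IsMinimalModel v E W ↔
      ∀ u : Kˣ, 4 • v u ≤ v W.c₄ → 6 • v u ≤ v W.c₆ → v u ≤ 0 := by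
  rw [isMinimalModel_iff_forall_map_u_nonpos hΔ hmod hint]
  simp only [← and_imp, ← exists_isIntegralModel_smul_iff hv2 hv3]
  exact ⟨fun h _ ⟨C, hu, hC⟩ ↦ hu ▸ h C hC, fun h C hC ↦ h C.u ⟨C, rfl, hC⟩⟩

end Models

theorem statement9_general {K : Type*} [Field K] (v : AddValuation K (WithTop ℝ))
    (hdiv : ∀ x : K, ∃ y : K, 12 • v y = v x) (hv2 : v (2 : K) = 0) (hv3 : v (3 : K) = 0)
    (E W : WeierstrassCurve K) (hΔ : E.Δ ≠ 0)
    (hmod : IsModelOf E W) (hint : IsIntegralModel v W) :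
    IsMinimalModel v E W ↔ min (v W.c₄) (v W.c₆) = 0 := by
  have h2 : (2 : K) ≠ 0 := ne_zero_of_addValuation_eq_zero v hv2
  have h3 : (3 : K) ≠ 0 := ne_zero_of_addValuation_eq_zero v hv3
  have hWΔ : W.Δ ≠ 0 := hmod.Δ_ne_zero hΔ
  obtain ⟨a, ha⟩ : ∃ a, 4 • v a = v W.c₄ := exists_nsmul_map_eq_of_dvd v (by norm_num) hdiv W.c₄
  obtain ⟨b, hb⟩ : ∃ b, 6 • v b = v W.c₆ := exists_nsmul_map_eq_of_dvd v (by norm_num) hdiv W.c₆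
  have hab : a ≠ 0 ∨ b ≠ 0 :=
    (c₄_ne_zero_or_c₆_ne_zero h2 h3 hWΔ).imp
      (ne_zero_of_nsmul_map_eq v four_ne_zero ha) (ne_zero_of_nsmul_map_eq v (by norm_num) hb)
  rw [isMinimalModel_iff_forall_unit_map_nonpos hv2 hv3 hWΔ hmod hint,
    ← (le_min hint.map_c₄_nonneg hint.map_c₆_nonneg).ge_iff_eq', ← ha, ← hb]
  exact forall_unit_map_nonpos_iff_min_nonpos v (by norm_num) (by norm_num) hab

/-- criterion for minimality. Let `K` be an algebraically closed field with a
nontrivial non-archimedean valuation `v` whose residue field has characteristic ≠ 2, 3 (encoded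
by `v 2 = 0` and `v 3 = 0`).  Let `W` be an integral Weierstrass model of an elliptic curve
`E` over `K`.  Then `W` is a minimal integral Weierstrass model of `E` if and only if
`min (v c₄) (v c₆) = 0`. -/
theorem statement9 {K : Type*} [Field K] [IsAlgClosed K] (v : AddValuation K (WithTop ℝ))
    (hv : ∃ x : K, x ≠ 0 ∧ v x ≠ 0) (hv2 : v (2 : K) = 0) (hv3 : v (3 : K) = 0)
    (E W : WeierstrassCurve K) (hΔ : E.Δ ≠ 0)
    (hmod : IsModelOf E W) (hint : IsIntegralModel v W) :
    IsMinimalModel v E W ↔ min (v W.c₄) (v W.c₆) = 0 := by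
  refine statement9_general v (fun x ↦ ?_) hv2 hv3 E W hΔ hmod hint
  exact (IsAlgClosed.exists_pow_nat_eq x (n := 12) (by norm_num)).imp fun y hy ↦ by
    rw [← v.map_pow, hy]
end

section
/- Let K be an algebraically closed field with a nontrivial non-archimedean valuation v: K* → ℝ, valuation ring R, and residue field k of characteristic different from 2 and 3. Let W be an integral Weierstrass model of an elliptic curve E over K, and suppose an admissible change of variables x = u²x' + r, y = u³y' + u²sx' + t transforms W into a minimal integral Weierstrass model W' of E. Then u, r, s, t all lie in R. -/
open WeierstrassCurve

/-! Write `Δ'` for the discriminant of `C • W`. Since `Δ = u¹² Δ'`, minimality forces `v u ≥ 0`. The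
transformation formulas then exhibit `r`, `s` and `t`, in this order, as roots of monic polynomials
with integral coefficients, and a valuation ring is integrally closed. For `s` and `t` these come
directly from the formulas for `a₂` and `a₆`; for `r`, the polynomials given by `b₆` and `b₈` have
leading terms `4r³` and `3r⁴`, so `r` times the first minus the second is a monic quartic. -/

section MonicEquations

open Polynomial

variable {R S : Type*} [CommRing R] [CommRing S] [Algebra R S]

theorem isIntegral_of_sq_add_mul_add_eq_zero {x b c : S} (hb : IsIntegral R b)
    (hc : IsIntegral R c) (hx : x ^ 2 + b * x + c = 0) : IsIntegral R x := by
  let p : (integralClosure R S)[X] := X ^ 2 + C ⟨b, hb⟩ * X + C ⟨c, hc⟩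
  have hmonic : p.Monic := by unfold p; monicity!
  have hroot : aeval x p = 0 := by simpa [p, Subalgebra.algebraMap_def] using hx
  exact isIntegral_trans (A := integralClosure R S) x ⟨p, hmonic, hroot⟩

theorem isIntegral_of_pow_four_add_mul_sq_add_mul_add_eq_zero {x b c d : S} (hb : IsIntegral R b)
    (hc : IsIntegral R c) (hd : IsIntegral R d) (hx : x ^ 4 + b * x ^ 2 + c * x + d = 0) :
    IsIntegral R x := by
  let p : (integralClosure R S)[X] :=
    X ^ 4 + C ⟨b, hb⟩ * X ^ 2 + C ⟨c, hc⟩ * X + C ⟨d, hd⟩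
  have hmonic : p.Monic := by unfold p; monicity!
  have hroot : aeval x p = 0 := by simpa [p, Subalgebra.algebraMap_def] using hx
  exact isIntegral_trans (A := integralClosure R S) x ⟨p, hmonic, hroot⟩

end MonicEquations

section VariableChangeEquations

theorem unit_pow_mul_inv_pow_mul {M : Type*} [CommMonoid M] (u : Mˣ) (n : ℕ) (x : M) :
    (u : M) ^ n * ((u⁻¹ : Mˣ) ^ n * x) = x := by
  rw [← mul_assoc, ← mul_pow, u.mul_inv, one_pow, one_mul]

variable {R : Type*} [CommRing R] (W : WeierstrassCurve R) (C : VariableChange R)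

theorem u_pow_twelve_mul_variableChange_Δ : (C.u : R) ^ 12 * (C • W).Δ = W.Δ := by
  rw [variableChange_Δ, unit_pow_mul_inv_pow_mul]

theorem variableChange_r_quartic :
    C.r ^ 4 + -W.b₄ * C.r ^ 2 + -(2 * W.b₆ + C.u ^ 6 * (C • W).b₆) * C.r
      + (C.u ^ 8 * (C • W).b₈ - W.b₈) = 0 := by
  rw [variableChange_b₆, variableChange_b₈, unit_pow_mul_inv_pow_mul, unit_pow_mul_inv_pow_mul]
  ring

theorem variableChange_s_quadratic :
    C.s ^ 2 + W.a₁ * C.s + (C.u ^ 2 * (C • W).a₂ - W.a₂ - 3 * C.r) = 0 := by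
  rw [variableChange_a₂, unit_pow_mul_inv_pow_mul]
  ring

theorem variableChange_t_quadratic :
    C.t ^ 2 + (W.a₃ + C.r * W.a₁) * C.t
      + (C.u ^ 6 * (C • W).a₆ - W.a₆ - C.r * W.a₄ - C.r ^ 2 * W.a₂ - C.r ^ 3) = 0 := by
  rw [variableChange_a₆, unit_pow_mul_inv_pow_mul]
  ring

end VariableChangeEquations

section IntegralVariableChange

variable {R K : Type*} [CommRing R] [Field K] [Algebra R K]

theorem isIntegral_variableChange_r (W : WeierstrassCurve K) [WeierstrassCurve.IsIntegral R W]
    (C : VariableChange K) [WeierstrassCurve.IsIntegral R (C • W)]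
    (hu : IsIntegral R (C.u : K)) : IsIntegral R C.r := by
  have hb₄ : IsIntegral R W.b₄ := integralModel_b₄_eq R W ▸ isIntegral_algebraMap
  have hb₆ : IsIntegral R W.b₆ := integralModel_b₆_eq R W ▸ isIntegral_algebraMap
  have hb₈ : IsIntegral R W.b₈ := integralModel_b₈_eq R W ▸ isIntegral_algebraMap
  have hb₆' : IsIntegral R (C • W).b₆ := integralModel_b₆_eq R (C • W) ▸ isIntegral_algebraMap
  have hb₈' : IsIntegral R (C • W).b₈ := integralModel_b₈_eq R (C • W) ▸ isIntegral_algebraMap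
  have h2 : IsIntegral R (2 : K) := map_ofNat (algebraMap R K) 2 ▸ isIntegral_algebraMap
  exact isIntegral_of_pow_four_add_mul_sq_add_mul_add_eq_zero hb₄.neg
    ((h2.mul hb₆).add ((hu.pow 6).mul hb₆')).neg (((hu.pow 8).mul hb₈').sub hb₈)
    (variableChange_r_quartic W C)

theorem isIntegral_variableChange_s (W : WeierstrassCurve K) [WeierstrassCurve.IsIntegral R W]
    (C : VariableChange K) [WeierstrassCurve.IsIntegral R (C • W)]
    (hu : IsIntegral R (C.u : K)) : IsIntegral R C.s := by
  have ha₁ : IsIntegral R W.a₁ := integralModel_a₁_eq R W ▸ isIntegral_algebraMap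
  have ha₂ : IsIntegral R W.a₂ := integralModel_a₂_eq R W ▸ isIntegral_algebraMap
  have ha₂' : IsIntegral R (C • W).a₂ := integralModel_a₂_eq R (C • W) ▸ isIntegral_algebraMap
  have h3 : IsIntegral R (3 : K) := map_ofNat (algebraMap R K) 3 ▸ isIntegral_algebraMap
  have hr : IsIntegral R C.r := isIntegral_variableChange_r W C hu
  exact isIntegral_of_sq_add_mul_add_eq_zero ha₁
    ((((hu.pow 2).mul ha₂').sub ha₂).sub (h3.mul hr)) (variableChange_s_quadratic W C)

theorem isIntegral_variableChange_t (W : WeierstrassCurve K) [WeierstrassCurve.IsIntegral R W]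
    (C : VariableChange K) [WeierstrassCurve.IsIntegral R (C • W)]
    (hu : IsIntegral R (C.u : K)) : IsIntegral R C.t := by
  have ha₁ : IsIntegral R W.a₁ := integralModel_a₁_eq R W ▸ isIntegral_algebraMap
  have ha₂ : IsIntegral R W.a₂ := integralModel_a₂_eq R W ▸ isIntegral_algebraMap
  have ha₃ : IsIntegral R W.a₃ := integralModel_a₃_eq R W ▸ isIntegral_algebraMap
  have ha₄ : IsIntegral R W.a₄ := integralModel_a₄_eq R W ▸ isIntegral_algebraMap
  have ha₆ : IsIntegral R W.a₆ := integralModel_a₆_eq R W ▸ isIntegral_algebraMap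
  have ha₆' : IsIntegral R (C • W).a₆ := integralModel_a₆_eq R (C • W) ▸ isIntegral_algebraMap
  have hr : IsIntegral R C.r := isIntegral_variableChange_r W C hu
  exact isIntegral_of_sq_add_mul_add_eq_zero (ha₃.add (hr.mul ha₁))
    ((((((hu.pow 6).mul ha₆').sub ha₆).sub (hr.mul ha₄)).sub ((hr.pow 2).mul ha₂)).sub (hr.pow 3))
    (variableChange_t_quadratic W C)

end IntegralVariableChange

section AddValuation

variable {K Γ₀ : Type*} [Field K] [LinearOrderedAddCommGroupWithTop Γ₀] (v : AddValuation K Γ₀)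

theorem isIntegral_integer_iff_nonneg {x : K} : IsIntegral v.toValuation.integer x ↔ 0 ≤ v x :=
  (Valuation.integer.integers v.toValuation).isIntegral_iff_v_le_one

theorem nonneg_u_of_variableChange_Δ_le {W : WeierstrassCurve K} (hΔ : W.Δ ≠ 0)
    {C : VariableChange K} (hle : v (C • W).Δ ≤ v W.Δ) : 0 ≤ v (C.u : K) := by
  have hmul : (C.u : K) ^ 12 * (C • W).Δ = W.Δ := u_pow_twelve_mul_variableChange_Δ W C
  have hΔ' : v (C • W).Δ ≠ ⊤ := v.ne_top_iff.2 (right_ne_zero_of_mul (hmul ▸ hΔ))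
  have hnsmul : 0 + v (C • W).Δ ≤ 12 • v (C.u : K) + v (C • W).Δ := by
    rwa [zero_add, ← v.map_pow, ← v.map_mul, hmul]
  exact (nsmul_nonneg_iff (by norm_num)).1 ((add_le_add_iff_left_of_ne_top hΔ').1 hnsmul)

end AddValuation

theorem IsIntegralModel.isIntegral_s12 {K : Type*} [Field K] {v : AddValuation K (WithTop ℝ)}
    {W : WeierstrassCurve K} (hW : IsIntegralModel v W) :
    WeierstrassCurve.IsIntegral v.toValuation.integer W :=
  let ⟨h₁, h₂, h₃, h₄, h₆⟩ := hW
  isIntegral_of_exists_lift _ ⟨⟨W.a₁, h₁⟩, rfl⟩ ⟨⟨W.a₂, h₂⟩, rfl⟩ ⟨⟨W.a₃, h₃⟩, rfl⟩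
    ⟨⟨W.a₄, h₄⟩, rfl⟩ ⟨⟨W.a₆, h₆⟩, rfl⟩

theorem IsModelOf.Δ_ne_zero_s12 {K : Type*} [Field K] {E W : WeierstrassCurve K}
    (hW : IsModelOf E W) (hE : E.Δ ≠ 0) : W.Δ ≠ 0 := by
  obtain ⟨C, rfl⟩ := hW
  exact right_ne_zero_of_mul (u_pow_twelve_mul_variableChange_Δ E C ▸ hE)

theorem statement12_general {K : Type*} [Field K] (v : AddValuation K (WithTop ℝ))
    (E W : WeierstrassCurve K) (hΔ : E.Δ ≠ 0)
    (hmod : IsModelOf E W) (hint : IsIntegralModel v W)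
    (C : VariableChange K) (hmin : IsMinimalModel v E (C • W)) :
    0 ≤ v (C.u : K) ∧ 0 ≤ v C.r ∧ 0 ≤ v C.s ∧ 0 ≤ v C.t := by
  obtain ⟨-, hint', hle⟩ := hmin
  have hW := hint.isIntegral_s12
  have hCW := hint'.isIntegral_s12
  have hu : 0 ≤ v (C.u : K) :=
    nonneg_u_of_variableChange_Δ_le v (hmod.Δ_ne_zero_s12 hΔ) (hle W hmod hint)
  have hu_int := (isIntegral_integer_iff_nonneg v).2 hu
  exact ⟨hu, (isIntegral_integer_iff_nonneg v).1 (isIntegral_variableChange_r W C hu_int),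
    (isIntegral_integer_iff_nonneg v).1 (isIntegral_variableChange_s W C hu_int),
    (isIntegral_integer_iff_nonneg v).1 (isIntegral_variableChange_t W C hu_int)⟩

/-- Let `W` be an integral Weierstrass model of an elliptic curve `E` over
`K`, and suppose an admissible change of variables `C = (u, r, s, t)` transforms `W` into a
minimal integral Weierstrass model of `E`.  Then `u, r, s, t` all lie in the valuation
ring `R`. -/
theorem statement12 {K : Type*} [Field K] [IsAlgClosed K] (v : AddValuation K (WithTop ℝ))
    (hv : ∃ x : K, x ≠ 0 ∧ v x ≠ 0) (hv2 : v (2 : K) = 0) (hv3 : v (3 : K) = 0)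
    (E W : WeierstrassCurve K) (hΔ : E.Δ ≠ 0)
    (hmod : IsModelOf E W) (hint : IsIntegralModel v W)
    (C : VariableChange K) (hmin : IsMinimalModel v E (C • W)) :
    0 ≤ v (C.u : K) ∧ 0 ≤ v C.r ∧ 0 ≤ v C.s ∧ 0 ≤ v C.t :=
  statement12_general v E W hΔ hmod hint C hmin
end

section
/- Let K be an algebraically closed field with a nontrivial non-archimedean valuation v: K* → ℝ and residue field k of characteristic different from 2 and 3. Let W be an integral Weierstrass model of an elliptic curve E over K with min{v(c₄), v(c₆)} = 0 (i.e. W is minimal). Then v(j) < 0 if and only if v(Δ) > 0, and in that case necessarily v(c₄) = 0. In other words, E has multiplicative reduction if and only if v(j(E)) < 0, and E can never have additive reduction (the case v(Δ) > 0 and v(c₄) > 0 is impossible). -/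
open WeierstrassCurve

/-!
Since `1728 Δ = c₄ ^ 3 - c₆ ^ 2` and integers have nonnegative valuation, `v c₄ > 0` and `v c₆ = 0`
force `v Δ ≤ v (1728 Δ) = 0`. Hence `v Δ > 0` implies `v c₄ = 0`, while `v j < 0` just says
`3 v c₄ < v Δ`.
-/

section Monoid

variable {R Γ₀ : Type*} [LinearOrderedAddCommMonoidWithTop Γ₀]

theorem addValuation_natCast_nonneg [Ring R] (v : AddValuation R Γ₀) (n : ℕ) : 0 ≤ v (n : R) := by
  induction n with
  | zero => simp
  | succ n ih => simpa only [Nat.cast_succ] using v.map_le_add ih v.map_one.ge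

theorem addValuation_Δ_nonpos_of_c₄_pos_of_c₆_nonpos [CommRing R] (v : AddValuation R Γ₀)
    (W : WeierstrassCurve R) (hc₄ : 0 < v W.c₄) (hc₆ : v W.c₆ ≤ 0) : v W.Δ ≤ 0 := by
  have c₄_cube_pos : 0 < v (W.c₄ ^ 3) :=
    v.map_pow W.c₄ 3 ▸ hc₄.trans_le (le_self_nsmul hc₄.le three_ne_zero)
  have c₆_sq_nonpos : v (W.c₆ ^ 2) ≤ 0 := v.map_pow W.c₆ 2 ▸ nsmul_nonpos hc₆ 2
  calc v W.Δ ≤ v 1728 + v W.Δ := le_add_of_nonneg_left (addValuation_natCast_nonneg v 1728)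
    _ = v (W.c₄ ^ 3 - W.c₆ ^ 2) := by rw [← v.map_mul, W.c_relation]
    _ = v (W.c₆ ^ 2) := v.map_sub_eq_of_lt_right (c₆_sq_nonpos.trans_lt c₄_cube_pos)
    _ ≤ 0 := c₆_sq_nonpos

end Monoid

section Group

variable {K Γ₀ : Type*} [LinearOrderedAddCommGroupWithTop Γ₀]

theorem addValuation_div_neg_iff [DivisionRing K] (v : AddValuation K Γ₀) {x y : K} (hy : y ≠ 0) :
    v (x / y) < 0 ↔ v x < v y := by
  have hvy : v y ≠ ⊤ := v.ne_top_iff.mpr hy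
  rw [v.map_div, ← LinearOrderedAddCommGroupWithTop.sub_self_eq_zero_iff_ne_top.mpr hvy,
    LinearOrderedAddCommGroupWithTop.sub_lt_sub_iff_left_of_ne_top hvy]

theorem statement16_general [Field K] (v : AddValuation K Γ₀) (W : WeierstrassCurve K)
    (hΔ : W.Δ ≠ 0) (hmin : min (v W.c₄) (v W.c₆) = 0) :
    (v (W.c₄ ^ 3 / W.Δ) < 0 ↔ 0 < v W.Δ) ∧
    (v (W.c₄ ^ 3 / W.Δ) < 0 → v W.c₄ = 0) ∧
    ¬(0 < v W.Δ ∧ 0 < v W.c₄) := by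
  have c₄_nonneg : 0 ≤ v W.c₄ := hmin ▸ min_le_left _ _
  have not_additive : ¬(0 < v W.Δ ∧ 0 < v W.c₄) := by
    rintro ⟨Δ_pos, c₄_pos⟩
    have c₆_nonpos : v W.c₆ ≤ 0 := (min_le_iff.mp hmin.le).resolve_left c₄_pos.not_ge
    exact (addValuation_Δ_nonpos_of_c₄_pos_of_c₆_nonpos v W c₄_pos c₆_nonpos).not_gt Δ_pos
  have c₄_eq_zero (Δ_pos : 0 < v W.Δ) : v W.c₄ = 0 :=
    c₄_nonneg.antisymm' (not_lt.mp fun c₄_pos => not_additive ⟨Δ_pos, c₄_pos⟩)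
  have j_neg_iff : v (W.c₄ ^ 3 / W.Δ) < 0 ↔ 0 < v W.Δ := by
    rw [addValuation_div_neg_iff v hΔ, v.map_pow]
    exact ⟨(nsmul_nonneg c₄_nonneg 3).trans_lt,
      fun Δ_pos => by rwa [c₄_eq_zero Δ_pos, nsmul_zero]⟩
  exact ⟨j_neg_iff, fun j_neg => c₄_eq_zero (j_neg_iff.mp j_neg), not_additive⟩

end Group

/-- multiplicative reduction and the j-invariant. Let `W` be a minimal
integral Weierstrass model (i.e. `min (v c₄) (v c₆) = 0`) of an elliptic curve `E` over `K`.
Then `v j < 0` if and only if `v Δ > 0`, and in that case necessarily `v c₄ = 0`; i.e. `E`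
has multiplicative reduction iff `v (j E) < 0`, and `E` can never have additive reduction
(`v Δ > 0` together with `v c₄ > 0` is impossible). -/
theorem statement16 {K : Type*} [Field K] [IsAlgClosed K] (v : AddValuation K (WithTop ℝ))
    (hv : ∃ x : K, x ≠ 0 ∧ v x ≠ 0) (hv2 : v (2 : K) = 0) (hv3 : v (3 : K) = 0)
    (W : WeierstrassCurve K) (hΔ : W.Δ ≠ 0)
    (hint : IsIntegralModel v W) (hmin : min (v W.c₄) (v W.c₆) = 0) :
    (v (W.c₄ ^ 3 / W.Δ) < 0 ↔ 0 < v W.Δ) ∧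
    (v (W.c₄ ^ 3 / W.Δ) < 0 → v W.c₄ = 0) ∧
    ¬(0 < v W.Δ ∧ 0 < v W.c₄) :=
  statement16_general v W hΔ hmin
end
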